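/- arXiv:2003.11152 — 5 statements merged into one kernel-verified Lean document; each statement's English description precedes it below -/
import Mathlib

section
/- Let S₁,…,S_d be pairwise commuting N×N complex matrices with joint spectrum Λ = {λ_1,…,λ_N} (relative to a simultaneous unitary upper-triangularization), let h be a multivariate polynomial with h(λ_i) ≠ 0 for all i, and let g be a multivariate polynomial satisfying g(λ_i) h(λ_i) = 1 for every 1 ≤ i ≤ N. Set H = h(S₁,…,S_d) and G = g(S₁,…,S_d). Then (I − H G)^N = 0; consequently, for every b ∈ ℂ^N the iterates of the iterative approximation algorithm satisfy x⁽ᵐ⁾ = H⁻¹ b for all m ≥ N, i.e., the algorithm converges in at most N steps. -/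
open Matrix

/-- The polynomial graph filter `h(S₁,…,S_d) = ∑ h_{l₁,…,l_d} S₁^{l₁}⋯S_d^{l_d}` associated with
a multivariate polynomial `h` and matrices `S₁,…,S_d`. -/
noncomputable def polyFilter {N d : ℕ} (S : Fin d → Matrix (Fin N) (Fin N) ℂ)
    (h : MvPolynomial (Fin d) ℂ) : Matrix (Fin N) (Fin N) ℂ :=
  ∑ m ∈ h.support, h.coeff m • (List.ofFn fun k => S k ^ m k).prod

/-- `U A Uᴴ` is upper triangular with diagonal `f`. -/
def TriDiag {N : ℕ} (U A : Matrix (Fin N) (Fin N) ℂ) (f : Fin N → ℂ) : Prop :=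
  (U * A * Uᴴ).BlockTriangular (id : Fin N → Fin N) ∧ ∀ i, (U * A * Uᴴ) i i = f i

lemma diag_mul_of_tri {N : ℕ} {A B : Matrix (Fin N) (Fin N) ℂ}
    (hA : A.BlockTriangular (id : Fin N → Fin N)) (hB : B.BlockTriangular (id : Fin N → Fin N))
    (i : Fin N) : (A * B) i i = A i i * B i i := by
  rw [Matrix.mul_apply]
  refine Finset.sum_eq_single i (fun j _ hj => ?_) (by simp)
  rcases lt_or_gt_of_ne hj with hlt | hlt
  · rw [hA (by simpa using hlt), zero_mul]
  · rw [hB (by simpa using hlt), mul_zero]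

section
variable {N : ℕ} {U : Matrix (Fin N) (Fin N) ℂ}

lemma TriDiag.one (hU : U * Uᴴ = 1) : TriDiag U 1 (fun _ => 1) := by
  refine ⟨?_, ?_⟩ <;> rw [mul_one, hU]
  · exact Matrix.blockTriangular_one
  · simp

lemma TriDiag.zero : TriDiag U 0 (fun _ => 0) := by
  refine ⟨?_, ?_⟩ <;> rw [mul_zero, zero_mul]
  · exact Matrix.blockTriangular_zero
  · simp

lemma TriDiag.add {A B : Matrix (Fin N) (Fin N) ℂ} {f g : Fin N → ℂ}
    (hA : TriDiag U A f) (hB : TriDiag U B g) : TriDiag U (A + B) (fun i => f i + g i) := by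
  refine ⟨?_, ?_⟩ <;> rw [mul_add, add_mul]
  · exact hA.1.add hB.1
  · intro i; rw [Matrix.add_apply, hA.2, hB.2]

lemma TriDiag.smul {A : Matrix (Fin N) (Fin N) ℂ} {f : Fin N → ℂ} (c : ℂ)
    (hA : TriDiag U A f) : TriDiag U (c • A) (fun i => c * f i) := by
  refine ⟨?_, ?_⟩ <;> rw [Matrix.mul_smul, Matrix.smul_mul]
  · intro i j hij
    rw [Matrix.smul_apply, hA.1 hij, smul_zero]
  · intro i; rw [Matrix.smul_apply, hA.2, smul_eq_mul]

lemma conj_mul_conj (hU : Uᴴ * U = 1) (A B : Matrix (Fin N) (Fin N) ℂ) :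
    U * (A * B) * Uᴴ = (U * A * Uᴴ) * (U * B * Uᴴ) := by
  calc U * (A * B) * Uᴴ = U * A * 1 * B * Uᴴ := by simp only [mul_one, mul_assoc]
    _ = _ := by rw [← hU]; simp only [mul_assoc]

lemma TriDiag.mul (hU : Uᴴ * U = 1) {A B : Matrix (Fin N) (Fin N) ℂ} {f g : Fin N → ℂ}
    (hA : TriDiag U A f) (hB : TriDiag U B g) : TriDiag U (A * B) (fun i => f i * g i) := by
  refine ⟨?_, ?_⟩ <;> rw [conj_mul_conj hU]
  · exact hA.1.mul hB.1
  · intro i; rw [diag_mul_of_tri hA.1 hB.1, hA.2, hB.2]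

lemma TriDiag.pow (hU : U * Uᴴ = 1) (hU' : Uᴴ * U = 1) {A : Matrix (Fin N) (Fin N) ℂ}
    {f : Fin N → ℂ} (hA : TriDiag U A f) (n : ℕ) : TriDiag U (A ^ n) (fun i => f i ^ n) := by
  induction n with
  | zero => simpa using TriDiag.one hU
  | succ n ih => simpa only [pow_succ] using ih.mul hU' hA

lemma TriDiag.prod (hU : U * Uᴴ = 1) (hU' : Uᴴ * U = 1) {d : ℕ}
    (A : Fin d → Matrix (Fin N) (Fin N) ℂ) (f : Fin d → Fin N → ℂ)
    (hA : ∀ k, TriDiag U (A k) (f k)) :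
    TriDiag U (List.ofFn A).prod (fun i => ∏ k, f k i) := by
  induction d with
  | zero => simpa using TriDiag.one hU
  | succ d ih =>
    simp only [List.ofFn_succ, List.prod_cons, Fin.prod_univ_succ]
    exact (hA 0).mul hU' (ih (fun k => A k.succ) (fun k => f k.succ) (fun k => hA k.succ))

lemma TriDiag.sum {ι : Type*} (s : Finset ι)
    (A : ι → Matrix (Fin N) (Fin N) ℂ) (f : ι → Fin N → ℂ)
    (hA : ∀ k, TriDiag U (A k) (f k)) :
    TriDiag U (∑ k ∈ s, A k) (fun i => ∑ k ∈ s, f k i) := by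
  classical
  induction s using Finset.induction_on with
  | empty => simpa using TriDiag.zero
  | insert a s ha ih =>
    simp only [Finset.sum_insert ha]
    exact (hA a).add ih

lemma TriDiag.polyFilter (hU : U * Uᴴ = 1) (hU' : Uᴴ * U = 1) {d : ℕ}
    (S : Fin d → Matrix (Fin N) (Fin N) ℂ) (lam : Fin N → Fin d → ℂ)
    (hS : ∀ k, TriDiag U (S k) (fun i => lam i k)) (h : MvPolynomial (Fin d) ℂ) :
    TriDiag U (polyFilter S h) (fun i => MvPolynomial.eval (lam i) h) := by
  simp only [MvPolynomial.eval_eq']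
  exact TriDiag.sum _ _ (fun m i => h.coeff m * ∏ k, lam i k ^ m k) fun m =>
    (TriDiag.prod hU hU' _ (fun k i => lam i k ^ m k) fun k => (hS k).pow hU hU' (m k)).smul _

lemma unitary_conj_power (hU : U * Uᴴ = 1) (hU' : Uᴴ * U = 1) (A : Matrix (Fin N) (Fin N) ℂ) (n : ℕ) :
    U * A ^ n * Uᴴ = (U * A * Uᴴ) ^ n := by
  induction n with
  | zero => simpa using hU
  | succ n ih => rw [pow_succ, conj_mul_conj hU', ih, pow_succ]

lemma TriDiag.pow_eq_zero (hU : U * Uᴴ = 1) (hU' : Uᴴ * U = 1) {A : Matrix (Fin N) (Fin N) ℂ}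
    (hA : TriDiag U A (fun _ => 0)) : A ^ N = 0 := by
  have h1 := Matrix.charpoly_of_isUpperTriangular (U * A * Uᴴ) hA.1
  have h2 := Matrix.aeval_self_charpoly (U * A * Uᴴ)
  rw [h1] at h2
  simp only [hA.2] at h2
  simp only [map_zero, sub_zero, Finset.prod_const, Finset.card_univ, Fintype.card_fin, map_pow,
    Polynomial.aeval_X] at h2
  rw [← unitary_conj_power hU hU'] at h2
  calc A ^ N = (Uᴴ * U) * A ^ N * (Uᴴ * U) := by rw [hU', one_mul, mul_one]
    _ = Uᴴ * (U * A ^ N * Uᴴ) * U := by simp only [mul_assoc]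
    _ = 0 := by rw [h2, mul_zero, zero_mul]

end

/-- if `g` interpolates `1/h` on the joint spectrum, i.e. `g(λᵢ) h(λᵢ) = 1` for all
`i`, then with `H = h(S₁,…,S_d)` and `G = g(S₁,…,S_d)` we have `(I − H G)^N = 0`; consequently
the iterative approximation algorithm converges in at most `N` steps: `x⁽ᵐ⁾ = H⁻¹ b` for all
`m ≥ N`. -/
theorem interpolation_converges_in_N_steps {N d : ℕ}
    (S : Fin d → Matrix (Fin N) (Fin N) ℂ)
    (hcomm : ∀ k k' : Fin d, Commute (S k) (S k'))
    (U : Matrix (Fin N) (Fin N) ℂ) (hU : U ∈ Matrix.unitaryGroup (Fin N) ℂ)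
    (htri : ∀ k : Fin d, (U * S k * Uᴴ).BlockTriangular (id : Fin N → Fin N))
    (lam : Fin N → Fin d → ℂ)
    (hlam : ∀ (i : Fin N) (k : Fin d), lam i k = (U * S k * Uᴴ) i i)
    (h g : MvPolynomial (Fin d) ℂ)
    (hh : ∀ i : Fin N, MvPolynomial.eval (lam i) h ≠ 0)
    (hg : ∀ i : Fin N, MvPolynomial.eval (lam i) g * MvPolynomial.eval (lam i) h = 1)
    (H G : Matrix (Fin N) (Fin N) ℂ)
    (hH : H = polyFilter S h) (hG : G = polyFilter S g) :
    (1 - H * G) ^ N = 0 ∧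
    ∀ (b : Fin N → ℂ) (e z x : ℕ → Fin N → ℂ),
      e 0 = b → x 0 = 0 →
      (∀ m : ℕ, z (m + 1) = G.mulVec (e m)) →
      (∀ m : ℕ, e (m + 1) = e m - H.mulVec (z (m + 1))) →
      (∀ m : ℕ, x (m + 1) = x m + z (m + 1)) →
      ∀ m : ℕ, N ≤ m → x m = H⁻¹.mulVec b := by
  have hU1 : U * Uᴴ = 1 := Matrix.mem_unitaryGroup_iff.mp hU
  have hU2 : Uᴴ * U = 1 := Matrix.mem_unitaryGroup_iff'.mp hU
  have hS : ∀ k, TriDiag U (S k) (fun i => lam i k) := fun k =>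
    ⟨htri k, fun i => (hlam i k).symm⟩
  have hHt := TriDiag.polyFilter hU1 hU2 S lam hS h
  have hGt := TriDiag.polyFilter hU1 hU2 S lam hS g
  rw [← hH] at hHt
  rw [← hG] at hGt
  have hnil : (1 - H * G) ^ N = 0 := by
    apply TriDiag.pow_eq_zero hU1 hU2
    have h3 := (TriDiag.one hU1).add ((hHt.mul hU2 hGt).smul (-1))
    have h4 : (fun i => 1 + -1 * (MvPolynomial.eval (lam i) h * MvPolynomial.eval (lam i) g))
        = fun _ => (0 : ℂ) := by
      funext i
      rw [mul_comm (MvPolynomial.eval (lam i) h), hg i]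
      norm_num
    rw [h4, neg_one_smul, ← sub_eq_add_neg] at h3
    exact h3
  refine ⟨hnil, ?_⟩
  intro b e z x he0 hx0 hz he hx m hm
  have hunit : IsUnit (H * G) := by
    have h5 : IsNilpotent (1 - H * G) := ⟨N, hnil⟩
    simpa using h5.isUnit_one_sub
  have hHu : IsUnit H.det := by
    have h6 := (Matrix.isUnit_iff_isUnit_det _).mp hunit
    rw [Matrix.det_mul] at h6
    exact isUnit_of_mul_isUnit_left h6
  have hem : ∀ m, e m = ((1 - H * G) ^ m).mulVec b := by
    intro m
    induction m with
    | zero => simpa using he0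
    | succ m ih =>
      rw [he, hz, pow_succ', ← Matrix.mulVec_mulVec, ← ih, Matrix.sub_mulVec, Matrix.one_mulVec,
        Matrix.mulVec_mulVec]
  have hres : ∀ m, e m = b - H.mulVec (x m) := by
    intro m
    induction m with
    | zero => simp [he0, hx0]
    | succ m ih => rw [he, hx, ih, Matrix.mulVec_add, sub_sub]
  have h7 : H.mulVec (x m) = b := by
    have h8 := hres m
    rw [hem, pow_eq_zero_of_le hm hnil, Matrix.zero_mulVec] at h8
    exact (sub_eq_zero.mp h8.symm).symm
  rw [← h7, Matrix.mulVec_mulVec, Matrix.nonsing_inv_mul H hHu, Matrix.one_mulVec]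
end

section
/- Let S₁,…,S_d be pairwise commuting Hermitian N×N complex matrices, let h and g be multivariate polynomials such that H = h(S₁,…,S_d) is invertible, and set G = g(S₁,…,S_d). Then ‖I − G H‖₂ = ρ(I − G H); moreover, if β := ρ(I − G H) < 1, then for every b ∈ ℂ^N the iterates x⁽ᵐ⁾ of the iterative approximation algorithm satisfy ‖x⁽ᵐ⁾ − H⁻¹ b‖₂ ≤ (‖H‖₂ ‖G‖₂ / (1 − β)) · βᵐ · ‖H⁻¹ b‖₂ for all m ≥ 1. -/
open Matrix

/-- The Euclidean (ℓ²) norm of a vector in ℂ^N. -/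
noncomputable def l2norm {N : ℕ} (v : Fin N → ℂ) : ℝ :=
  ‖(EuclideanSpace.equiv (Fin N) ℂ).symm v‖

/-- The spectral radius of an N×N complex matrix. -/
noncomputable def specRad {N : ℕ} (A : Matrix (Fin N) (Fin N) ℂ) : ℝ :=
  sSup ((fun z : ℂ => ‖z‖) '' spectrum ℂ A)

/-- The ℓ²→ℓ² operator norm of an N×N complex matrix. -/
noncomputable def opNorm {N : ℕ} (A : Matrix (Fin N) (Fin N) ℂ) : ℝ :=
  ‖LinearMap.toContinuousLinearMap (Matrix.toEuclideanLin A)‖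

open scoped Matrix.Norms.L2Operator in
lemma opNorm_eq {N : ℕ} (A : Matrix (Fin N) (Fin N) ℂ) : opNorm A = ‖A‖ := by
  rw [Matrix.l2_opNorm_def]; rfl

lemma commute_polyFilter {N d : ℕ} (S : Fin d → Matrix (Fin N) (Fin N) ℂ)
    (h : MvPolynomial (Fin d) ℂ) (X : Matrix (Fin N) (Fin N) ℂ)
    (hX : ∀ k, Commute X (S k)) : Commute X (polyFilter S h) := by
  unfold polyFilter
  refine Commute.sum_right _ _ _ fun m _ => Commute.smul_right ?_ _
  refine Commute.list_prod_right _ _ fun y hy => ?_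
  obtain ⟨k, rfl⟩ := (List.mem_ofFn' _ _).1 hy
  exact (hX k).pow_right _

open scoped Matrix.Norms.L2Operator in
lemma normal_opNorm_eq_specRad {N : ℕ} (A : Matrix (Fin N) (Fin N) ℂ) (hA : IsStarNormal A) :
    opNorm A = specRad A := by
  rw [opNorm_eq]
  rcases subsingleton_or_nontrivial (Matrix (Fin N) (Fin N) ℂ) with hs | hn
  · have : A = 0 := Subsingleton.elim _ _
    simp [specRad, this, spectrum.of_subsingleton]
  · have hr := IsStarNormal.spectralRadius_eq_nnnorm A
    obtain ⟨k, hk, hk'⟩ := spectrum.exists_nnnorm_eq_spectralRadius_of_nonempty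
      (spectrum.nonempty A)
    symm
    apply IsGreatest.csSup_eq
    constructor
    · refine ⟨k, hk, ?_⟩
      rw [hr] at hk'
      have : ‖k‖₊ = ‖A‖₊ := by exact_mod_cast hk'
      exact congrArg NNReal.toReal this
    · rintro _ ⟨y, hy, rfl⟩
      exact spectrum.norm_le_norm_of_mem hy

open scoped Matrix.Norms.L2Operator in
lemma l2norm_mulVec_le {N : ℕ} (A : Matrix (Fin N) (Fin N) ℂ) (v : Fin N → ℂ) :
    l2norm (A.mulVec v) ≤ opNorm A * l2norm v := by
  rw [opNorm_eq]
  exact Matrix.l2_opNorm_mulVec A (WithLp.toLp 2 v)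

open scoped Matrix.Norms.L2Operator in
lemma one_sub_le {N : ℕ} [Nontrivial (Matrix (Fin N) (Fin N) ℂ)]
    (G H : Matrix (Fin N) (Fin N) ℂ) :
    1 - opNorm (1 - G * H) ≤ opNorm H * opNorm G := by
  simp only [opNorm_eq]
  have h1 : ‖(1 : Matrix (Fin N) (Fin N) ℂ)‖ = 1 := CStarRing.norm_one
  have h2 := norm_add_le (1 - G * H) (G * H)
  have h3 := norm_mul_le G H
  rw [sub_add_cancel, h1] at h2
  linarith [mul_comm ‖G‖ ‖H‖]

/-- for commuting Hermitian shifts `S₁,…,S_d`, `H = h(S₁,…,S_d)` invertible and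
`G = g(S₁,…,S_d)`, one has `‖I − G H‖₂ = ρ(I − G H)`; moreover, if `β = ρ(I − G H) < 1`, then
the iterates of the iterative approximation algorithm satisfy
`‖x⁽ᵐ⁾ − H⁻¹ b‖₂ ≤ (‖H‖₂ ‖G‖₂ / (1 − β)) βᵐ ‖H⁻¹ b‖₂` for all `m ≥ 1`. -/
theorem hermitian_shifts_norm_eq_specRad_and_convergence {N d : ℕ}
    (S : Fin d → Matrix (Fin N) (Fin N) ℂ)
    (hcomm : ∀ k k' : Fin d, Commute (S k) (S k'))
    (hherm : ∀ k : Fin d, (S k).IsHermitian)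
    (h g : MvPolynomial (Fin d) ℂ)
    (H G : Matrix (Fin N) (Fin N) ℂ)
    (hH : H = polyFilter S h) (hG : G = polyFilter S g) (hinv : IsUnit H) :
    opNorm (1 - G * H) = specRad (1 - G * H) ∧
    (specRad (1 - G * H) < 1 →
      ∀ (b : Fin N → ℂ) (e z x : ℕ → Fin N → ℂ),
        e 0 = b → x 0 = 0 →
        (∀ m : ℕ, z (m + 1) = G.mulVec (e m)) →
        (∀ m : ℕ, e (m + 1) = e m - H.mulVec (z (m + 1))) →
        (∀ m : ℕ, x (m + 1) = x m + z (m + 1)) →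
        ∀ m : ℕ, 1 ≤ m →
          l2norm (x m - H⁻¹.mulVec b) ≤
            opNorm H * opNorm G / (1 - specRad (1 - G * H)) *
              specRad (1 - G * H) ^ m * l2norm (H⁻¹.mulVec b)) := by
  have key : ∀ p q : MvPolynomial (Fin d) ℂ, Commute (polyFilter S p) (polyFilter S q) ∧
      Commute (star (polyFilter S p)) (polyFilter S q) := by
    intro p q
    have h1 : ∀ k, Commute (polyFilter S p) (S k) := fun k =>
      (commute_polyFilter S p (S k) (fun j => hcomm k j)).symm
    refine ⟨commute_polyFilter S q _ h1, commute_polyFilter S q _ fun k => ?_⟩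
    have h2 : Commute (star (polyFilter S p)) (star (S k)) := (h1 k).star_star
    have h3 : star (S k) = S k := hherm k
    rwa [h3] at h2
  have hnormal : IsStarNormal (1 - G * H) := by
    subst hH hG
    have h1 := (key g g).2
    have h2 := (key g h).2
    have h3 := (key h g).2
    have h4 := (key h h).2
    constructor
    rw [star_sub, star_one, star_mul]
    refine Commute.sub_left (Commute.one_left _) (Commute.sub_right (Commute.one_right _) ?_)
    exact (h3.mul_right h4).mul_left (h1.mul_right h2)
  have heq := normal_opNorm_eq_specRad _ hnormal
  refine ⟨heq, ?_⟩
  rw [← heq]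
  intro hβ b e z x he0 hx0 hz he hx m _
  have hdet : IsUnit H.det := (Matrix.isUnit_iff_isUnit_det H).1 hinv
  have hrep : ∀ m, e m = H.mulVec (H⁻¹.mulVec b - x m) := by
    intro m
    induction m with
    | zero => simp [he0, hx0, Matrix.mul_nonsing_inv H hdet]
    | succ k ih =>
      rw [he, ih, hx, ← Matrix.mulVec_sub, sub_sub]
  have hstep : ∀ m, x (m + 1) - H⁻¹.mulVec b = (1 - G * H).mulVec (x m - H⁻¹.mulVec b) := by
    intro m
    rw [hx, hz, hrep, Matrix.sub_mulVec, Matrix.one_mulVec, Matrix.mulVec_mulVec,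
      Matrix.mulVec_sub, Matrix.mulVec_sub]
    abel
  have hnn : ∀ v : Fin N → ℂ, 0 ≤ l2norm v := fun v => norm_nonneg _
  have h0 : 0 ≤ opNorm (1 - G * H) := norm_nonneg _
  have hpow : ∀ m, l2norm (x m - H⁻¹.mulVec b) ≤
      opNorm (1 - G * H) ^ m * l2norm (H⁻¹.mulVec b) := by
    intro m
    induction m with
    | zero => simp [hx0, l2norm]
    | succ k ih =>
      rw [hstep, pow_succ', mul_assoc]
      exact (l2norm_mulVec_le _ _).trans (mul_le_mul_of_nonneg_left ih h0)
  refine (hpow m).trans ?_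
  rcases subsingleton_or_nontrivial (Matrix (Fin N) (Fin N) ℂ) with hs | hn
  · have hz0 : l2norm (H⁻¹.mulVec b) = 0 := by
      have hv : H⁻¹.mulVec b = 0 := by
        rw [Subsingleton.elim H⁻¹ 0, Matrix.zero_mulVec]
      simp [hv, l2norm]
    simp [hz0]
  · refine mul_le_mul_of_nonneg_right ?_ (hnn _)
    refine le_mul_of_one_le_left (pow_nonneg h0 m) ?_
    rw [one_le_div (by linarith)]
    exact one_sub_le G H
end

section
/- Let S₁,…,S_d be pairwise commuting N×N complex matrices, U a unitary matrix such that Ŝ_k = U S_k Uᴴ is upper triangular for every k, and suppose the joint spectrum points λ_i = (Ŝ₁(i,i),…,Ŝ_d(i,i)), 1 ≤ i ≤ N, are pairwise distinct elements of ℂ^d. Then every N×N complex matrix H satisfying H S_k = S_k H for all 1 ≤ k ≤ d is a polynomial graph filter of S₁,…,S_d, i.e., there exists a multivariate polynomial h such that H = h(S₁,…,S_d). -/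
open Matrix

lemma aux_polyFilter {N d : ℕ} (S : Fin d → Matrix (Fin N) (Fin N) ℂ)
    (hcomm : ∀ k k' : Fin d, Commute (S k) (S k')) (c : Fin d → ℂ) (p : Polynomial ℂ) :
    ∃ h : MvPolynomial (Fin d) ℂ, Polynomial.aeval (∑ k, c k • S k) p = polyFilter S h := by
  classical
  let A := Algebra.adjoin ℂ (Set.range S)
  letI : CommRing A := Algebra.adjoinCommRingOfComm ℂ (by
    rintro _ ⟨k, rfl⟩ _ ⟨k', rfl⟩
    exact hcomm k k')
  let s : Fin d → A := fun k => ⟨S k, Algebra.subset_adjoin ⟨k, rfl⟩⟩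
  have key : ∀ h : MvPolynomial (Fin d) ℂ,
      polyFilter S h = A.val (MvPolynomial.aeval s h) := by
    intro h
    rw [MvPolynomial.aeval_def, MvPolynomial.eval₂_eq', map_sum, polyFilter]
    refine Finset.sum_congr rfl fun m _ => ?_
    rw [← Algebra.smul_def, map_smul, ← List.prod_ofFn, map_list_prod, List.map_ofFn]
    rfl
  refine ⟨Polynomial.aeval (∑ k, c k • MvPolynomial.X k) p, ?_⟩
  rw [key, ← Polynomial.aeval_algHom_apply, ← Polynomial.aeval_algHom_apply]
  congr 2
  rw [map_sum, map_sum]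
  refine Finset.sum_congr rfl fun k _ => ?_
  rw [map_smul, map_smul, MvPolynomial.aeval_X]
  rfl

lemma aux_sep {N d : ℕ} (lam : Fin N → Fin d → ℂ) (hdist : Function.Injective lam) :
    ∃ c : Fin d → ℂ, Function.Injective fun i => ∑ k, c k * lam i k := by
  classical
  let q : Fin N × Fin N → MvPolynomial (Fin d) ℂ := fun ij =>
    ∑ k, MvPolynomial.C (lam ij.1 k - lam ij.2 k) * MvPolynomial.X k
  have hev : ∀ ij c, MvPolynomial.eval c (q ij)
      = ∑ k, c k * lam ij.1 k - ∑ k, c k * lam ij.2 k := by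
    intro ij c
    simp only [q, map_sum, map_mul, MvPolynomial.eval_C, MvPolynomial.eval_X]
    rw [← Finset.sum_sub_distrib]
    exact Finset.sum_congr rfl fun k _ => by ring
  have hP : ∏ ij ∈ Finset.univ.filter (fun ij : Fin N × Fin N => ij.1 ≠ ij.2), q ij ≠ 0 := by
    rw [Finset.prod_ne_zero_iff]
    intro ij hij h0
    have hne : ij.1 ≠ ij.2 := (Finset.mem_filter.1 hij).2
    apply hne
    apply hdist
    funext k
    have h1 := hev ij (Pi.single k 1)
    rw [h0] at h1
    simp [Pi.single_apply] at h1
    exact (sub_eq_zero.1 h1.symm)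
  obtain ⟨c, hc⟩ : ∃ c, MvPolynomial.eval c
      (∏ ij ∈ Finset.univ.filter (fun ij : Fin N × Fin N => ij.1 ≠ ij.2), q ij) ≠ 0 := by
    by_contra! hcon
    exact hP (MvPolynomial.funext fun c => by rw [hcon c, map_zero])
  refine ⟨c, fun i j hij => ?_⟩
  by_contra hne
  rw [map_prod, Finset.prod_ne_zero_iff] at hc
  refine hc (i, j) (by simp [hne]) ?_
  rw [hev]
  exact sub_eq_zero.2 hij

lemma aux_poly {N : ℕ} (T H : Matrix (Fin N) (Fin N) ℂ) (t : Fin N → ℂ)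
    (ht : Function.Injective t) (hroot : ∀ i, (T - t i • (1 : Matrix (Fin N) (Fin N) ℂ)).det = 0)
    (hHT : H * T = T * H) : ∃ p : Polynomial ℂ, H = Polynomial.aeval T p := by
  classical
  have hv : ∀ i, ∃ v : Fin N → ℂ, v ≠ 0 ∧ T *ᵥ v = t i • v := by
    intro i
    obtain ⟨v, hv0, hv⟩ := Matrix.exists_mulVec_eq_zero_iff.2 (hroot i)
    refine ⟨v, hv0, ?_⟩
    rw [Matrix.sub_mulVec, Matrix.smul_mulVec, Matrix.one_mulVec] at hv
    exact sub_eq_zero.1 hv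
  choose v hv0 hv using hv
  have hli : LinearIndependent ℂ v :=
    Module.End.eigenvectors_linearIndependent' (Matrix.toLin' T) t ht v fun i =>
      Module.End.hasEigenvector_iff.2 ⟨Module.End.mem_eigenspace_iff.2 (by simpa using hv i), hv0 i⟩
  let b := basisOfLinearIndependentOfCardEqFinrank' v hli (by simp)
  have hb : ∀ i, b i = v i := fun i => by simp [b]
  have hmu : ∀ i, H *ᵥ v i = b.repr (H *ᵥ v i) i • v i := by
    intro i
    set w := H *ᵥ v i with hw
    have hTw : T *ᵥ w = t i • w := by
      rw [hw, Matrix.mulVec_mulVec, ← hHT, ← Matrix.mulVec_mulVec, hv, Matrix.mulVec_smul]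
    have hsum : ∑ j, b.repr w j • v j = w := by
      simpa only [hb] using b.sum_repr w
    have h2 : ∑ j, (b.repr w j * (t j - t i)) • v j = 0 := by
      have h3 : T *ᵥ w = ∑ j, (b.repr w j * t j) • v j := by
        conv_lhs => rw [← hsum]
        rw [← Matrix.toLin'_apply, map_sum]
        refine Finset.sum_congr rfl fun j _ => ?_
        rw [map_smul, Matrix.toLin'_apply, hv, smul_smul]
      have h4 : t i • w = ∑ j, (b.repr w j * t i) • v j := by
        conv_lhs => rw [← hsum]
        rw [Finset.smul_sum]
        refine Finset.sum_congr rfl fun j _ => ?_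
        rw [smul_smul, mul_comm]
      simp only [mul_sub, sub_smul, Finset.sum_sub_distrib]
      rw [← h3, ← h4, hTw, sub_self]
    have h5 := Fintype.linearIndependent_iff.1 hli _ h2
    conv_lhs => rw [← hsum]
    refine Finset.sum_eq_single i (fun j _ hji => ?_) (by simp)
    have h6 : t j - t i ≠ 0 := sub_ne_zero.2 fun h => hji (ht h)
    rw [(mul_eq_zero.1 (h5 j)).resolve_right h6, zero_smul]
  let p := Lagrange.interpolate Finset.univ t fun i => b.repr (H *ᵥ v i) i
  refine ⟨p, ?_⟩
  apply Matrix.toLin'.injective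
  refine b.ext fun i => ?_
  have hp : p.eval (t i) = b.repr (H *ᵥ v i) i :=
    Lagrange.eval_interpolate_at_node _ ht.injOn (Finset.mem_univ i)
  rw [hb, Matrix.toLin'_apply, hmu, ← hp]
  have h7 := Module.End.aeval_apply_of_hasEigenvector (p := p) (f := Matrix.toLin' T)
    (Module.End.hasEigenvector_iff.2
      ⟨Module.End.mem_eigenspace_iff.2 (by simpa using hv i), hv0 i⟩)
  rw [← h7]
  have h8 := Polynomial.aeval_algHom_apply (Matrix.toLinAlgEquiv' (R := ℂ) (n := Fin N)).toAlgHom T p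
  exact LinearMap.congr_fun h8 (v i)

/-- if the joint spectrum points `λᵢ` of the commuting matrices `S₁,…,S_d`
(relative to a simultaneous unitary upper-triangularization) are pairwise distinct, then every
matrix `H` commuting with every `S_k` is a polynomial graph filter of `S₁,…,S_d`. -/
theorem commuting_filter_is_polynomial {N d : ℕ}
    (S : Fin d → Matrix (Fin N) (Fin N) ℂ)
    (hcomm : ∀ k k' : Fin d, Commute (S k) (S k'))
    (U : Matrix (Fin N) (Fin N) ℂ) (hU : U ∈ Matrix.unitaryGroup (Fin N) ℂ)
    (htri : ∀ k : Fin d, (U * S k * Uᴴ).BlockTriangular (id : Fin N → Fin N))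
    (lam : Fin N → Fin d → ℂ)
    (hlam : ∀ (i : Fin N) (k : Fin d), lam i k = (U * S k * Uᴴ) i i)
    (hdist : Function.Injective lam)
    (H : Matrix (Fin N) (Fin N) ℂ)
    (hHcomm : ∀ k : Fin d, H * S k = S k * H) :
    ∃ h : MvPolynomial (Fin d) ℂ, H = polyFilter S h := by
  obtain ⟨c, hc⟩ := aux_sep lam hdist
  have hUU : U * Uᴴ = 1 := Matrix.mem_unitaryGroup_iff.1 hU
  obtain ⟨p, hp⟩ := aux_poly (∑ k, c k • S k) H (fun i => ∑ k, c k * lam i k) hc (by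
    intro i
    set M := ∑ k, c k • S k - (∑ k, c k * lam i k) • (1 : Matrix (Fin N) (Fin N) ℂ) with hM
    have hconj : U * M * Uᴴ = ∑ k, c k • (U * S k * Uᴴ)
        - (∑ k, c k * lam i k) • (1 : Matrix (Fin N) (Fin N) ℂ) := by
      simp only [hM, mul_sub, sub_mul, Finset.mul_sum, Finset.sum_mul, mul_smul_comm,
        smul_mul_assoc, mul_one, hUU]
    have htr : (U * M * Uᴴ).BlockTriangular (id : Fin N → Fin N) := by
      intro a b hab
      have hab' : a ≠ b := fun h => by simp [h] at hab
      rw [hconj]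
      simp only [Matrix.sub_apply, Matrix.sum_apply, Matrix.smul_apply, Matrix.one_apply_ne hab',
        smul_zero, sub_zero]
      refine Finset.sum_eq_zero fun k _ => ?_
      rw [htri k hab, smul_zero]
    have hdet : (U * M * Uᴴ).det = 0 := by
      rw [Matrix.det_of_upperTriangular htr]
      refine Finset.prod_eq_zero (Finset.mem_univ i) ?_
      rw [hconj]
      simp [Matrix.sum_apply, hlam]
    have hd : U.det * Uᴴ.det = 1 := by rw [← Matrix.det_mul, hUU, Matrix.det_one]
    rw [Matrix.det_mul, Matrix.det_mul] at hdet
    calc M.det = M.det * (U.det * Uᴴ.det) := by rw [hd, mul_one]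
      _ = U.det * M.det * Uᴴ.det := by ring
      _ = 0 := hdet)
    (by
      rw [Finset.mul_sum, Finset.sum_mul]
      refine Finset.sum_congr rfl fun k _ => ?_
      rw [mul_smul_comm, smul_mul_assoc, hHcomm])
  obtain ⟨h, hh⟩ := aux_polyFilter S hcomm c p
  exact ⟨h, hp.trans hh⟩
end

section
/- Let S₁,…,S_d be pairwise commuting nonzero N×N complex matrices that are simultaneously diagonalized by a unitary matrix U (i.e., U S_k Uᴴ = D_k is diagonal for every k), and suppose the joint spectrum points λ_i = (D₁(i,i),…,D_d(i,i)), 1 ≤ i ≤ N, are pairwise distinct. Let 𝒫 be the set of all polynomial graph filters of S₁,…,S_d, and let ‖·‖_F denote the Frobenius norm. Then there exist positive constants C₀ and C₁ such that for every N×N complex matrix H, C₀ (∑_{k=1}^{d} ‖[H,S_k]‖_F²)^{1/2} ≤ inf_{P ∈ 𝒫} ‖H − P‖_F ≤ C₁ (∑_{k=1}^{d} ‖[H,S_k]‖_F²)^{1/2}, where [H,S_k] = H S_k − S_k H. -/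
open Matrix

/-- The Frobenius norm of an N×N complex matrix. -/
noncomputable def frobNorm {N : ℕ} (A : Matrix (Fin N) (Fin N) ℂ) : ℝ :=
  Real.sqrt (∑ i : Fin N, ∑ j : Fin N, ‖A i j‖ ^ 2)

/-- Squared Frobenius norm. -/
noncomputable def frobSqAux {N : ℕ} (A : Matrix (Fin N) (Fin N) ℂ) : ℝ :=
  ∑ i : Fin N, ∑ j : Fin N, ‖A i j‖ ^ 2

lemma frobSqAux_nonneg {N : ℕ} (A : Matrix (Fin N) (Fin N) ℂ) : 0 ≤ frobSqAux A := by
  unfold frobSqAux; positivity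

lemma frobNorm_eq_aux {N : ℕ} (A : Matrix (Fin N) (Fin N) ℂ) :
    frobNorm A = Real.sqrt (frobSqAux A) := rfl

lemma frobNorm_sq_aux {N : ℕ} (A : Matrix (Fin N) (Fin N) ℂ) :
    frobNorm A ^ 2 = frobSqAux A := by
  rw [frobNorm_eq_aux, Real.sq_sqrt (frobSqAux_nonneg A)]

lemma frobSqAux_trace {N : ℕ} (A : Matrix (Fin N) (Fin N) ℂ) :
    (frobSqAux A : ℂ) = (A * Aᴴ).trace := by
  simp only [frobSqAux, Matrix.trace, Matrix.diag, Matrix.mul_apply, Matrix.conjTranspose_apply]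
  push_cast
  refine Finset.sum_congr rfl fun i _ => Finset.sum_congr rfl fun j _ => ?_
  exact (Complex.mul_conj' (A i j)).symm

/-- Conjugation by a unitary as a ring homomorphism. -/
noncomputable def conjAux {N : ℕ} (U : Matrix (Fin N) (Fin N) ℂ) (h1 : Uᴴ * U = 1)
    (h2 : U * Uᴴ = 1) : Matrix (Fin N) (Fin N) ℂ →ₐ[ℂ] Matrix (Fin N) (Fin N) ℂ :=
  AlgHom.ofLinearMap
    { toFun := fun A => U * A * Uᴴ
      map_add' := by intro A B; simp [mul_add, add_mul]
      map_smul' := by intro c A; simp }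
    (by simp [h2])
    (by
      intro A B
      show U * (A * B) * Uᴴ = U * A * Uᴴ * (U * B * Uᴴ)
      calc U * (A * B) * Uᴴ = U * A * 1 * B * Uᴴ := by simp [Matrix.mul_assoc]
        _ = _ := by rw [← h1]; simp only [Matrix.mul_assoc])

lemma conjAux_apply {N : ℕ} (U : Matrix (Fin N) (Fin N) ℂ) (h1 : Uᴴ * U = 1)
    (h2 : U * Uᴴ = 1) (A : Matrix (Fin N) (Fin N) ℂ) : conjAux U h1 h2 A = U * A * Uᴴ := rfl

lemma frobSqAux_conj {N : ℕ} (U : Matrix (Fin N) (Fin N) ℂ) (h1 : Uᴴ * U = 1)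
    (h2 : U * Uᴴ = 1) (A : Matrix (Fin N) (Fin N) ℂ) :
    frobSqAux (conjAux U h1 h2 A) = frobSqAux A := by
  have : (frobSqAux (conjAux U h1 h2 A) : ℂ) = frobSqAux A := by
    rw [frobSqAux_trace, frobSqAux_trace]
    have h3 : (conjAux U h1 h2 A)ᴴ = conjAux U h1 h2 Aᴴ := by
      simp [conjAux_apply, Matrix.conjTranspose_mul, Matrix.mul_assoc]
    rw [h3, ← map_mul, conjAux_apply, Matrix.trace_mul_comm, ← Matrix.mul_assoc, h1, Matrix.one_mul]
  exact_mod_cast this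

lemma conjAux_polyFilter {N d : ℕ} (S : Fin d → Matrix (Fin N) (Fin N) ℂ)
    (U : Matrix (Fin N) (Fin N) ℂ) (h1 : Uᴴ * U = 1) (h2 : U * Uᴴ = 1)
    (D : Fin d → Fin N → ℂ)
    (hdiag : ∀ k : Fin d, conjAux U h1 h2 (S k) = Matrix.diagonal (D k))
    (h : MvPolynomial (Fin d) ℂ) :
    conjAux U h1 h2 (polyFilter S h) =
      Matrix.diagonal (fun i => MvPolynomial.eval (fun k => D k i) h) := by
  have key : ∀ m : Fin d →₀ ℕ, conjAux U h1 h2 (List.ofFn fun k => S k ^ m k).prod =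
      Matrix.diagonal (fun i => ∏ k, D k i ^ m k) := by
    intro m
    rw [map_list_prod, List.map_ofFn]
    have : (⇑(conjAux U h1 h2) ∘ fun k => S k ^ m k) =
        ⇑(Matrix.diagonalRingHom (Fin N) ℂ) ∘ fun k => D k ^ m k := by
      funext k
      simp [hdiag, Matrix.diagonal_pow]
    rw [this, ← List.map_ofFn, ← map_list_prod, List.prod_ofFn]
    simp only [Matrix.diagonalRingHom_apply]
    congr 1
    funext i
    simp
  unfold polyFilter
  rw [map_sum]
  simp only [map_smul, key]
  ext i j
  rw [Matrix.sum_apply]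
  by_cases hij : i = j
  · subst hij
    simp [MvPolynomial.eval_eq']
  · simp [hij]

lemma interp_aux {N d : ℕ} (D : Fin d → Fin N → ℂ)
    (hdist : Function.Injective fun i : Fin N => fun k : Fin d => D k i) (g : Fin N → ℂ) :
    ∃ h : MvPolynomial (Fin d) ℂ, ∀ i, MvPolynomial.eval (fun k => D k i) h = g i := by
  have h1 : ∀ i j : Fin N, ∃ p : MvPolynomial (Fin d) ℂ, i ≠ j →
      MvPolynomial.eval (fun k => D k i) p = 1 ∧ MvPolynomial.eval (fun k => D k j) p = 0 := by
    intro i j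
    by_cases hij : i = j
    · exact ⟨0, fun h => absurd hij h⟩
    · obtain ⟨k, hk⟩ := Function.ne_iff.mp (fun h => hij (hdist h))
      have hk' : D k i - D k j ≠ 0 := sub_ne_zero.mpr hk
      refine ⟨MvPolynomial.C (D k i - D k j)⁻¹ * (MvPolynomial.X k - MvPolynomial.C (D k j)),
        fun _ => ⟨?_, ?_⟩⟩
      · simp [hk']
      · simp
  choose p hp using h1
  refine ⟨∑ i, MvPolynomial.C (g i) * ∏ j ∈ Finset.univ.erase i, p i j, fun i => ?_⟩
  rw [map_sum, Finset.sum_eq_single i]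
  · rw [map_mul, map_prod, Finset.prod_eq_one]
    · simp
    · intro j hj
      exact (hp i j (Finset.ne_of_mem_erase hj).symm).1
  · intro b _ hb
    rw [map_mul, map_prod, Finset.prod_eq_zero (i := i)]
    · simp
    · simp [hb.symm]
    · exact (hp b i hb).2
  · simp

/-- for nonzero commuting shifts `S₁,…,S_d` simultaneously diagonalized by a
unitary `U` with pairwise distinct joint spectrum points, there are constants `C₀, C₁ > 0` such
that for every matrix `H`,
`C₀ (∑ₖ ‖[H,Sₖ]‖_F²)^{1/2} ≤ dist_F(H, 𝒫) ≤ C₁ (∑ₖ ‖[H,Sₖ]‖_F²)^{1/2}`,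
where `𝒫` is the set of polynomial graph filters of `S₁,…,S_d`. -/
theorem distance_to_polynomial_filters_bounds {N d : ℕ}
    (S : Fin d → Matrix (Fin N) (Fin N) ℂ)
    (hS0 : ∀ k : Fin d, S k ≠ 0)
    (hcomm : ∀ k k' : Fin d, Commute (S k) (S k'))
    (U : Matrix (Fin N) (Fin N) ℂ) (hU : U ∈ Matrix.unitaryGroup (Fin N) ℂ)
    (D : Fin d → Fin N → ℂ)
    (hdiag : ∀ k : Fin d, U * S k * Uᴴ = Matrix.diagonal (D k))
    (hdist : Function.Injective fun i : Fin N => fun k : Fin d => D k i) :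
    ∃ C₀ : ℝ, 0 < C₀ ∧ ∃ C₁ : ℝ, 0 < C₁ ∧
      ∀ H : Matrix (Fin N) (Fin N) ℂ,
        C₀ * Real.sqrt (∑ k : Fin d, frobNorm (H * S k - S k * H) ^ 2) ≤
          sInf ((fun P => frobNorm (H - P)) '' Set.range (polyFilter S)) ∧
        sInf ((fun P => frobNorm (H - P)) '' Set.range (polyFilter S)) ≤
          C₁ * Real.sqrt (∑ k : Fin d, frobNorm (H * S k - S k * H) ^ 2) := by
  have h1 : Uᴴ * U = 1 := Matrix.mem_unitaryGroup_iff'.mp hU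
  have h2 : U * Uᴴ = 1 := Matrix.mem_unitaryGroup_iff.mp hU
  have hdiag' : ∀ k, conjAux U h1 h2 (S k) = Matrix.diagonal (D k) := hdiag
  set w : Fin N → Fin N → ℝ := fun i j => ∑ k, ‖D k j - D k i‖ ^ 2 with hw
  have hw0 : ∀ i j, 0 ≤ w i j := fun i j => by simp only [hw]; positivity
  have hwpos : ∀ i j, i ≠ j → 0 < w i j := by
    intro i j hij
    obtain ⟨k, hk⟩ := Function.ne_iff.mp (fun h => hij (hdist h))
    have hk' : 0 < ‖D k j - D k i‖ ^ 2 := by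
      have : D k j - D k i ≠ 0 := sub_ne_zero.mpr (Ne.symm hk)
      positivity
    exact lt_of_lt_of_le hk' (Finset.single_le_sum
      (f := fun k => ‖D k j - D k i‖ ^ 2) (fun _ _ => by positivity) (Finset.mem_univ k))
  have hwii : ∀ i, w i i = 0 := fun i => by simp [hw]
  have le_dbl : ∀ (f : Fin N → Fin N → ℝ), (∀ i j, 0 ≤ f i j) → ∀ i j, f i j ≤ ∑ i, ∑ j, f i j := by
    intro f hf i j
    exact (Finset.single_le_sum (f := fun j => f i j) (fun j _ => hf i j) (Finset.mem_univ j)).trans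
      (Finset.single_le_sum (f := fun i => ∑ j, f i j)
        (fun i _ => Finset.sum_nonneg fun j _ => hf i j) (Finset.mem_univ i))
  set W : ℝ := 1 + ∑ i, ∑ j, w i j with hW
  have hWpos : 0 < W := by
    have : 0 ≤ ∑ i, ∑ j, w i j := Finset.sum_nonneg fun i _ => Finset.sum_nonneg fun j _ => hw0 i j
    linarith
  have hwW : ∀ i j, w i j ≤ W := fun i j => by have := le_dbl w hw0 i j; linarith
  have hwi0 : ∀ i j, 0 ≤ (w i j)⁻¹ := fun i j => inv_nonneg.mpr (hw0 i j)
  set K : ℝ := 1 + ∑ i, ∑ j, (w i j)⁻¹ with hK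
  have hKpos : 0 < K := by
    have : 0 ≤ ∑ i, ∑ j, (w i j)⁻¹ :=
      Finset.sum_nonneg fun i _ => Finset.sum_nonneg fun j _ => hwi0 i j
    linarith
  have hwK : ∀ i j, i ≠ j → 1 ≤ K * w i j := fun i j hij => by
    have h3 := le_dbl (fun i j => (w i j)⁻¹) hwi0 i j
    have h4 : (w i j)⁻¹ ≤ K := by linarith
    calc (1:ℝ) = (w i j)⁻¹ * w i j := (inv_mul_cancel₀ (hwpos i j hij).ne').symm
      _ ≤ K * w i j := mul_le_mul_of_nonneg_right h4 (hw0 i j)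
  refine ⟨(Real.sqrt W)⁻¹, by positivity, Real.sqrt K, by positivity, fun H => ?_⟩
  set G := conjAux U h1 h2 H with hG
  have hcommSum : ∑ k : Fin d, frobNorm (H * S k - S k * H) ^ 2 =
      ∑ i, ∑ j, w i j * ‖G i j‖ ^ 2 := by
    have : ∀ k, frobNorm (H * S k - S k * H) ^ 2 =
        ∑ i, ∑ j, ‖D k j - D k i‖ ^ 2 * ‖G i j‖ ^ 2 := by
      intro k
      rw [frobNorm_sq_aux, ← frobSqAux_conj U h1 h2, map_sub, map_mul, map_mul, hdiag', ← hG]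
      unfold frobSqAux
      refine Finset.sum_congr rfl fun i _ => Finset.sum_congr rfl fun j _ => ?_
      rw [Matrix.sub_apply, Matrix.mul_diagonal, Matrix.diagonal_mul, ← mul_pow, ← norm_mul]
      congr 2
      ring
    simp only [this, hw, Finset.sum_mul]
    rw [Finset.sum_comm]
    refine Finset.sum_congr rfl fun i _ => ?_
    rw [Finset.sum_comm]
  have hdistSq : ∀ h, frobSqAux (H - polyFilter S h) = ∑ i, ∑ j,
      ‖G i j - Matrix.diagonal (fun i => MvPolynomial.eval (fun k => D k i) h) i j‖ ^ 2 := by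
    intro h
    rw [← frobSqAux_conj U h1 h2, map_sub, conjAux_polyFilter S U h1 h2 D hdiag', ← hG]
    rfl
  rw [hcommSum]
  constructor
  · apply le_csInf
    · exact (Set.range_nonempty _).image _
    · rintro _ ⟨_, ⟨h, rfl⟩, rfl⟩
      simp only
      rw [frobNorm_eq_aux, inv_mul_le_iff₀ (by positivity), ← Real.sqrt_mul hWpos.le, hdistSq]
      apply Real.sqrt_le_sqrt
      rw [Finset.mul_sum]
      refine Finset.sum_le_sum fun i _ => ?_
      rw [Finset.mul_sum]
      refine Finset.sum_le_sum fun j _ => ?_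
      by_cases hij : i = j
      · subst hij
        rw [hwii]
        simp only [zero_mul]
        positivity
      · rw [Matrix.diagonal_apply_ne _ hij, sub_zero]
        exact mul_le_mul_of_nonneg_right (hwW i j) (by positivity)
  · obtain ⟨h, hh⟩ := interp_aux D hdist (fun i => G i i)
    have hmem : frobNorm (H - polyFilter S h) ∈
        (fun P => frobNorm (H - P)) '' Set.range (polyFilter S) := ⟨_, ⟨h, rfl⟩, rfl⟩
    refine (csInf_le ⟨0, ?_⟩ hmem).trans ?_
    · rintro _ ⟨_, _, rfl⟩
      exact Real.sqrt_nonneg _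
    · rw [frobNorm_eq_aux, ← Real.sqrt_mul hKpos.le, hdistSq]
      apply Real.sqrt_le_sqrt
      rw [Finset.mul_sum]
      refine Finset.sum_le_sum fun i _ => ?_
      rw [Finset.mul_sum]
      refine Finset.sum_le_sum fun j _ => ?_
      by_cases hij : i = j
      · subst hij
        rw [hwii, Matrix.diagonal_apply_eq, hh]
        simp
      · rw [Matrix.diagonal_apply_ne _ hij, sub_zero, ← mul_assoc]
        exact le_mul_of_one_le_left (by positivity) (hwK i j hij)
end

section
/- Let S₁,…,S_d be N×N complex matrices that are simultaneously diagonalized by a unitary matrix U, say U S_k Uᴴ = D_k with D_k diagonal, and suppose that the separation δ := min_{i ≠ j} (∑_{k=1}^{d} |D_k(j,j) − D_k(i,i)|²)^{1/2} is positive. Then for every N×N complex matrix H, inf over diagonal matrices D of ‖H − Uᴴ D U‖_F ≤ δ⁻¹ (∑_{k=1}^{d} ‖H S_k − S_k H‖_F²)^{1/2}, where ‖·‖_F is the Frobenius norm. -/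
open Matrix

theorem frobNorm_sq_eq {N : ℕ} (A : Matrix (Fin N) (Fin N) ℂ) :
    frobNorm A ^ 2 = ∑ i : Fin N, ∑ j : Fin N, ‖A i j‖ ^ 2 := by
  unfold frobNorm
  exact Real.sq_sqrt (by positivity)

theorem frobNorm_sq_trace {N : ℕ} (A : Matrix (Fin N) (Fin N) ℂ) :
    ((frobNorm A ^ 2 : ℝ) : ℂ) = (A * Aᴴ).trace := by
  rw [frobNorm_sq_eq]
  simp only [Matrix.trace, Matrix.diag, Matrix.mul_apply, Matrix.conjTranspose_apply]
  push_cast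
  refine Finset.sum_congr rfl fun i _ => Finset.sum_congr rfl fun j _ => ?_
  exact (Complex.mul_conj' (A i j)).symm

theorem frobNorm_conj {N : ℕ} (U A : Matrix (Fin N) (Fin N) ℂ) (h : Uᴴ * U = 1) :
    frobNorm (U * A * Uᴴ) ^ 2 = frobNorm A ^ 2 := by
  have : ((frobNorm (U * A * Uᴴ) ^ 2 : ℝ) : ℂ) = ((frobNorm A ^ 2 : ℝ) : ℂ) := by
    rw [frobNorm_sq_trace, frobNorm_sq_trace]
    have e : U * A * Uᴴ * (U * A * Uᴴ)ᴴ = U * (A * Aᴴ * Uᴴ) := by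
      simp only [Matrix.conjTranspose_mul, Matrix.conjTranspose_conjTranspose]
      calc _ = U * A * (Uᴴ * U) * Aᴴ * Uᴴ := by simp only [Matrix.mul_assoc]
        _ = _ := by rw [h]; simp only [Matrix.mul_assoc, Matrix.one_mul]
    rw [e, Matrix.trace_mul_comm, Matrix.mul_assoc, h, Matrix.mul_one]
  exact_mod_cast this

/-- if `U` simultaneously diagonalizes `S₁,…,S_d` (with `U Sₖ Uᴴ = diag (D k)`)
and the separation `δ = min_{i ≠ j} (∑ₖ |Dₖ(j,j) − Dₖ(i,i)|²)^{1/2}` is positive, then for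
every matrix `H`,
`inf_D ‖H − Uᴴ D U‖_F ≤ δ⁻¹ (∑ₖ ‖H Sₖ − Sₖ H‖_F²)^{1/2}`,
where the infimum is over all diagonal matrices `D`. -/
theorem diagonal_approximation_bound {N d : ℕ}
    (S : Fin d → Matrix (Fin N) (Fin N) ℂ)
    (U : Matrix (Fin N) (Fin N) ℂ) (hU : U ∈ Matrix.unitaryGroup (Fin N) ℂ)
    (D : Fin d → Fin N → ℂ)
    (hdiag : ∀ k : Fin d, U * S k * Uᴴ = Matrix.diagonal (D k))
    (δ : ℝ)
    (hδdef : δ = sInf ((fun p : Fin N × Fin N =>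
      Real.sqrt (∑ k : Fin d, ‖D k p.2 - D k p.1‖ ^ 2)) ''
        {p : Fin N × Fin N | p.1 ≠ p.2}))
    (hδpos : 0 < δ) :
    ∀ H : Matrix (Fin N) (Fin N) ℂ,
      sInf (Set.range fun Dm : Fin N → ℂ => frobNorm (H - Uᴴ * Matrix.diagonal Dm * U)) ≤
        δ⁻¹ * Real.sqrt (∑ k : Fin d, frobNorm (H * S k - S k * H) ^ 2) := by
  intro H
  have h1 : Uᴴ * U = 1 := (Matrix.mem_unitaryGroup_iff').1 hU
  have h2 : U * Uᴴ = 1 := (Matrix.mem_unitaryGroup_iff).1 hU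
  have hsep : ∀ i j : Fin N, i ≠ j → δ ^ 2 ≤ ∑ k : Fin d, ‖D k j - D k i‖ ^ 2 := by
    intro i j hij
    have hle : δ ≤ Real.sqrt (∑ k : Fin d, ‖D k j - D k i‖ ^ 2) := by
      rw [hδdef]
      refine csInf_le ⟨0, ?_⟩ ⟨(i, j), hij, rfl⟩
      rintro _ ⟨p, _, rfl⟩
      exact Real.sqrt_nonneg _
    calc δ ^ 2 ≤ Real.sqrt (∑ k : Fin d, ‖D k j - D k i‖ ^ 2) ^ 2 := by gcongr
      _ = _ := Real.sq_sqrt (by positivity)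
  set M := U * H * Uᴴ with hM
  have hcomm : ∀ k, frobNorm (H * S k - S k * H) ^ 2
      = ∑ i : Fin N, ∑ j : Fin N, ‖M i j‖ ^ 2 * ‖D k j - D k i‖ ^ 2 := by
    intro k
    have e : U * (H * S k - S k * H) * Uᴴ
        = M * Matrix.diagonal (D k) - Matrix.diagonal (D k) * M := by
      have e1 : U * H * Uᴴ * (U * S k * Uᴴ) = U * (H * S k) * Uᴴ := by
        calc _ = U * H * (Uᴴ * U) * S k * Uᴴ := by simp only [Matrix.mul_assoc]
          _ = _ := by rw [h1]; simp only [Matrix.mul_assoc, Matrix.one_mul]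
      have e2 : U * S k * Uᴴ * (U * H * Uᴴ) = U * (S k * H) * Uᴴ := by
        calc _ = U * S k * (Uᴴ * U) * H * Uᴴ := by simp only [Matrix.mul_assoc]
          _ = _ := by rw [h1]; simp only [Matrix.mul_assoc, Matrix.one_mul]
      rw [← hdiag k, hM, e1, e2, Matrix.mul_sub, Matrix.sub_mul]
    rw [← frobNorm_conj U _ h1, e, frobNorm_sq_eq]
    refine Finset.sum_congr rfl fun i _ => Finset.sum_congr rfl fun j _ => ?_
    rw [Matrix.sub_apply, Matrix.mul_diagonal, Matrix.diagonal_mul, ← mul_pow, ← norm_mul]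
    congr 2
    ring
  have happ : frobNorm (H - Uᴴ * Matrix.diagonal (fun i => M i i) * U) ^ 2
      = ∑ i : Fin N, ∑ j : Fin N, if i = j then 0 else ‖M i j‖ ^ 2 := by
    have e : U * (H - Uᴴ * Matrix.diagonal (fun i => M i i) * U) * Uᴴ
        = M - Matrix.diagonal (fun i => M i i) := by
      rw [Matrix.mul_sub, Matrix.sub_mul, ← hM]
      congr 1
      calc _ = (U * Uᴴ) * Matrix.diagonal (fun i => M i i) * (U * Uᴴ) := by
            simp only [Matrix.mul_assoc]
        _ = _ := by rw [h2, Matrix.one_mul, Matrix.mul_one]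
    rw [← frobNorm_conj U _ h1, e, frobNorm_sq_eq]
    refine Finset.sum_congr rfl fun i _ => Finset.sum_congr rfl fun j _ => ?_
    by_cases hij : i = j
    · subst hij; simp
    · simp [hij]
  have key : δ ^ 2 * frobNorm (H - Uᴴ * Matrix.diagonal (fun i => M i i) * U) ^ 2
      ≤ ∑ k : Fin d, frobNorm (H * S k - S k * H) ^ 2 := by
    simp only [hcomm, happ]
    have hswap : ∑ k : Fin d, ∑ i : Fin N, ∑ j : Fin N, ‖M i j‖ ^ 2 * ‖D k j - D k i‖ ^ 2
        = ∑ i : Fin N, ∑ j : Fin N, ∑ k : Fin d, ‖M i j‖ ^ 2 * ‖D k j - D k i‖ ^ 2 := by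
      rw [Finset.sum_comm]
      exact Finset.sum_congr rfl fun i _ => Finset.sum_comm
    rw [hswap, Finset.mul_sum]
    refine Finset.sum_le_sum fun i _ => ?_
    rw [Finset.mul_sum]
    refine Finset.sum_le_sum fun j _ => ?_
    rw [← Finset.mul_sum]
    split_ifs with hij
    · rw [mul_zero]; positivity
    · rw [mul_comm]
      exact mul_le_mul_of_nonneg_left (hsep i j hij) (by positivity)
  have hle : sInf (Set.range fun Dm : Fin N → ℂ =>
      frobNorm (H - Uᴴ * Matrix.diagonal Dm * U))
      ≤ frobNorm (H - Uᴴ * Matrix.diagonal (fun i => M i i) * U) := by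
    refine csInf_le ⟨0, ?_⟩ ⟨fun i => M i i, rfl⟩
    rintro _ ⟨p, rfl⟩
    exact Real.sqrt_nonneg _
  refine hle.trans ?_
  rw [inv_mul_eq_div, le_div_iff₀ hδpos]
  apply Real.le_sqrt_of_sq_le
  rw [mul_pow, mul_comm]
  exact key
end
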